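/- Let $t \ge 1$ be an integer and let $\lambda, a, b, c, d, e$ be strictly positive reals satisfying the system \[ \lambda a = 2b + (t+1)(d+e),\quad \lambda b = a + (t+1)b + tc,\quad \lambda c = 2b,\quad \lambda d = (t+1)(a+e),\quad \lambda e = a + d . \] Then: (i) $\lambda > t + 1$; (ii) $\lambda a = (\lambda^2 - (t+1)\lambda - 2t)\,b$; (iii) $(\lambda + (t+1))\,d = (t+1)(\lambda+1)\,e$; and moreover $d > e$, $a > c$ and $a > d$. -/

import Mathlib

/-!
Subtracting suitable equations of the system makes each comparison appear as a product: a positive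
factor times the difference in question equals a manifestly positive quantity. For instance, in the
difference of the equations for `a` and `d` the terms `(t + 1) * e` cancel, which leaves
`(lam + (t + 1)) * (a - d) = 2 * b`.
-/

/-- The system (WT): the eigenequations, for the eigenvalue `lam`, of the co-occurrence matrix of
the `t`-pleated bowtie, for a vector that is constant on the vertex classes. Its values are `a` at
the centre, `b` at the right hubs `r₁`, `r₂`, `c` at the right tips `r_i` (`i ≥ 3`), `d` at the
left hub `ℓ₁` and `e` at the left tips `ℓ_j` (`j ≥ 2`). The parameter `t` is any ring element, and
the vector is not required to be nonzero. -/
structure IsBowtieEigenvector {R : Type*} [CommRing R] (t lam a b c d e : R) : Prop where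
  centre : lam * a = 2 * b + (t + 1) * (d + e)
  rightHub : lam * b = a + (t + 1) * b + t * c
  rightTip : lam * c = 2 * b
  leftHub : lam * d = (t + 1) * (a + e)
  leftTip : lam * e = a + d

namespace IsBowtieEigenvector

variable {R : Type*} [CommRing R] {t lam a b c d e : R}

theorem eigenvalue_mul_centre (h : IsBowtieEigenvector t lam a b c d e) :
    lam * a = (lam ^ 2 - (t + 1) * lam - 2 * t) * b := by
  linear_combination -lam * h.rightHub - t * h.rightTip

theorem eigenvalue_add_mul_leftHub (h : IsBowtieEigenvector t lam a b c d e) :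
    (lam + (t + 1)) * d = (t + 1) * (lam + 1) * e := by
  linear_combination h.leftHub - (t + 1) * h.leftTip

variable [LinearOrder R] [IsStrictOrderedRing R]

theorem leftTip_lt_leftHub (h : IsBowtieEigenvector t lam a b c d e)
    (ht : 0 < t) (hlam : 0 < lam) (he : 0 < e) : e < d := by
  have factored : (lam + (t + 1)) * (d - e) = t * lam * e := by
    linear_combination h.eigenvalue_add_mul_leftHub
  have product_pos : 0 < (lam + (t + 1)) * (d - e) := by rw [factored]; positivity
  exact sub_pos.mp (pos_of_mul_pos_right product_pos (by positivity))

theorem leftHub_lt_centre (h : IsBowtieEigenvector t lam a b c d e)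
    (ht : 0 ≤ t) (hlam : 0 < lam) (hb : 0 < b) : d < a := by
  have factored : (lam + (t + 1)) * (a - d) = 2 * b := by
    linear_combination h.centre - h.leftHub
  have product_pos : 0 < (lam + (t + 1)) * (a - d) := by rw [factored]; positivity
  exact sub_pos.mp (pos_of_mul_pos_right product_pos (by positivity))

theorem rightTip_lt_centre (h : IsBowtieEigenvector t lam a b c d e)
    (ht : 0 ≤ t) (hlam : 0 < lam) (hd : 0 < d) (he : 0 < e) : c < a := by
  have factored : lam * (a - c) = (t + 1) * (d + e) := by
    linear_combination h.centre - h.rightTip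
  have product_pos : 0 < lam * (a - c) := by rw [factored]; positivity
  exact sub_pos.mp (pos_of_mul_pos_right product_pos hlam.le)

theorem rightTip_pos (h : IsBowtieEigenvector t lam a b c d e)
    (hlam : 0 < lam) (hb : 0 < b) : 0 < c := by
  have product_pos : 0 < lam * c := by rw [h.rightTip]; positivity
  exact pos_of_mul_pos_right product_pos hlam.le

theorem lt_eigenvalue (h : IsBowtieEigenvector t lam a b c d e)
    (ht : 0 ≤ t) (hlam : 0 < lam) (ha : 0 < a) (hb : 0 < b) : t + 1 < lam := by
  have hc : 0 < c := h.rightTip_pos hlam hb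
  have factored : (lam - (t + 1)) * b = a + t * c := by linear_combination h.rightHub
  have product_pos : 0 < (lam - (t + 1)) * b := by rw [factored]; positivity
  exact sub_pos.mp (pos_of_mul_pos_left product_pos hb.le)

end IsBowtieEigenvector

theorem shadow_identities_general {R : Type*} [CommRing R] [LinearOrder R] [IsStrictOrderedRing R]
    {t lam a b c d e : R} (h : IsBowtieEigenvector t lam a b c d e)
    (ht : 0 < t) (hlam : 0 < lam) (hb : 0 < b) (he : 0 < e) :
    lam > t + 1 ∧
    lam * a = (lam ^ 2 - (t + 1) * lam - 2 * t) * b ∧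
    (lam + (t + 1)) * d = (t + 1) * (lam + 1) * e ∧
    d > e ∧ a > c ∧ a > d := by
  have hed : e < d := h.leftTip_lt_leftHub ht hlam he
  have hda : d < a := h.leftHub_lt_centre ht.le hlam hb
  have hd : 0 < d := he.trans hed
  have ha : 0 < a := hd.trans hda
  exact ⟨h.lt_eigenvalue ht.le hlam ha hb, h.eigenvalue_mul_centre, h.eigenvalue_add_mul_leftHub,
    hed, h.rightTip_lt_centre ht.le hlam hd he, hda⟩

/-- Consequences, for a strictly positive solution, of the eigenequations of the clique-shadow
of the `t`-pleated bowtie. -/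
theorem shadow_identities (t : ℕ) (ht : 1 ≤ t)
    (lam a b c d e : ℝ)
    (hlam : 0 < lam) (ha : 0 < a) (hb : 0 < b) (hc : 0 < c) (hd : 0 < d) (he : 0 < e)
    (h1 : lam * a = 2 * b + ((t : ℝ) + 1) * (d + e))
    (h2 : lam * b = a + ((t : ℝ) + 1) * b + (t : ℝ) * c)
    (h3 : lam * c = 2 * b)
    (h4 : lam * d = ((t : ℝ) + 1) * (a + e))
    (h5 : lam * e = a + d) :
    lam > (t : ℝ) + 1 ∧
    lam * a = (lam ^ 2 - ((t : ℝ) + 1) * lam - 2 * (t : ℝ)) * b ∧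
    (lam + ((t : ℝ) + 1)) * d = ((t : ℝ) + 1) * (lam + 1) * e ∧
    d > e ∧ a > c ∧ a > d :=
  shadow_identities_general ⟨h1, h2, h3, h4, h5⟩ (Nat.cast_pos.mpr ht) hlam hb he
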